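/- Octopus inequality: let $V$ be a finite set, $c$ symmetric nonnegative conductances, $x\in V$ with $c_x:=\sum_{w\neq x}c_{xw}>0$, and let $\nu$ be the uniform measure on the symmetric group $S_V$ of permutations of $V$. For any $f:S_V\to\mathbb{R}$, $\sum_{y\neq x} c_{xy}\,\nu[(f\circ\tau_{xy}-f)^2] \geq \sum_{\{y,z\}\subseteq V\setminus\{x\}} \frac{c_{yx}c_{xz}}{c_x}\,\nu[(f\circ\tau_{yz}-f)^2]$, where $\tau_{ab}$ denotes right multiplication by the transposition of $a$ and $b$ (i.e., $(f\circ\tau_{ab})(\eta)=f(\eta\tau_{ab})$). -/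

import Mathlib

open Finset

noncomputable section

/-- Expectation w.r.t. the uniform probability measure on the symmetric group. -/
def permExp {V : Type*} [Fintype V] [DecidableEq V] (g : Equiv.Perm V → ℝ) : ℝ :=
  (∑ η : Equiv.Perm V, g η) / (Fintype.card (Equiv.Perm V))

/-!
For conductances `c` on the legs of an octopus with body `x`, let `P` be the sum of
`c j * c k * (1 - (x j) - (x k) + (j k))` over ordered pairs of legs. In any orthogonal
representation, the quadratic form of `P` is the total conductance times the difference of the two
sides of the octopus inequality, so the claim is that `P` is positive.

Write `P = a + B`, where `a > 0` is a scalar and `B` is a combination of transpositions. As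
`(a + B)² + (a² - B²) = 2a (a + B)`, it suffices that `a² - B²` is positive. Symmetrized over its
four summation indices, `a² - B²` is a combination with nonnegative coefficients of integral
elements `Q` supported on the symmetric group of the body and at most four legs. Each of them
satisfies `Q² = 24 Q`, hence `Q = Q² / 24` is positive.

In fact `Q = 0` unless at least three of the four legs are distinct. For legs `j, j, l, m` it is 24
times the central projection onto the irreducible representation `(2,2)` of `S₄`. For four distinct
legs it is `∑ χ i - χ x`, summed over the legs `i`, where `χ i` is the character of the
representation `(2,2)` of the stabilizer of `i` in `S₅`; this is 24 times the projection onto the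
part of `(3,2)` and of its conjugate `(2,2,1)` that transforms under the stabilizer of `x` according
to `(3,1)` and `(2,1,1)`, respectively.
-/

open Equiv

section Legs

variable {V R : Type*} [DecidableEq V] [Ring R]

/-- The weight of the identity in the term of the octopus belonging to the legs `j` and `k`; see
`legWeight_add_legElt`. -/
def legWeight (j k : V) : ℕ := if j = k then 2 else 1

/-- The odd part, in a representation `ρ`, of the term of the octopus with body `x` belonging to the
legs `j` and `k`; see `legWeight_add_legElt`. -/
def legElt (ρ : Perm V →* R) (x j k : V) : R :=
  ρ (swap j k) - ρ (swap x j) - ρ (swap x k) - if j = k then 1 else 0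

/-- The difference between `legWeight j k * legWeight l m` and `legElt ρ x j k * legElt ρ x l m`,
doubled and symmetrized in the two pairs of legs. -/
def pairDefect (ρ : Perm V →* R) (x j k l m : V) : R :=
  (2 * legWeight j k * legWeight l m : ℕ) -
    (legElt ρ x j k * legElt ρ x l m + legElt ρ x l m * legElt ρ x j k)

/-- The sum of `pairDefect` over the three ways of splitting four legs into two pairs. -/
def quarticDefect (ρ : Perm V →* R) (x j k l m : V) : R :=
  pairDefect ρ x j k l m + pairDefect ρ x j l k m + pairDefect ρ x j m k l

variable (ρ : Perm V →* R) (x j k l m : V)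

lemma legWeight_add_legElt :
    legWeight j k + legElt ρ x j k = 1 - ρ (swap x j) - ρ (swap x k) + ρ (swap j k) := by
  rw [legWeight, legElt]
  split_ifs <;> push_cast
  · rw [← one_add_one_eq_two]; abel
  · abel

lemma legWeight_comm : legWeight j k = legWeight k j := by
  simp only [legWeight, eq_comm]

lemma one_le_legWeight : 1 ≤ legWeight j k := by
  rw [legWeight]; split_ifs <;> norm_num

lemma legElt_comm : legElt ρ x j k = legElt ρ x k j := by
  simp only [legElt, swap_comm j k, eq_comm (a := j)]
  abel

lemma pairDefect_swap_left : pairDefect ρ x j k l m = pairDefect ρ x k j l m := by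
  simp only [pairDefect, legWeight_comm j k, legElt_comm ρ x j k]

lemma pairDefect_swap_right : pairDefect ρ x j k l m = pairDefect ρ x j k m l := by
  simp only [pairDefect, legWeight_comm l m, legElt_comm ρ x l m]

lemma pairDefect_swap_pairs : pairDefect ρ x j k l m = pairDefect ρ x l m j k := by
  simp only [pairDefect, mul_right_comm 2 (legWeight j k), add_comm (legElt ρ x j k * _)]

lemma quarticDefect_swap₁₂ : quarticDefect ρ x j k l m = quarticDefect ρ x k j l m := by
  rw [quarticDefect, quarticDefect, pairDefect_swap_left ρ x j k, pairDefect_swap_pairs ρ x j l,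
    pairDefect_swap_pairs ρ x j m, add_right_comm]

lemma quarticDefect_swap₂₃ : quarticDefect ρ x j k l m = quarticDefect ρ x j l k m := by
  simp only [quarticDefect, pairDefect_swap_right ρ x j m k l]
  abel

lemma quarticDefect_swap₃₄ : quarticDefect ρ x j k l m = quarticDefect ρ x j k m l := by
  rw [quarticDefect, quarticDefect, pairDefect_swap_right ρ x j k, add_right_comm]

end Legs

section Degenerate

variable {V R : Type*} [DecidableEq V] [Ring R] (ρ : Perm V →* R) {x j k l m : V}

lemma map_swap_mul_self (a b : V) : ρ (swap a b) * ρ (swap a b) = 1 := by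
  rw [← map_mul, swap_mul_self, map_one]

-- Both sides are the sum of the two 3-cycles on `{a, b, c}`.
lemma map_swap_anticommutator_eq {a b c : V} (hac : a ≠ c) (hbc : b ≠ c) :
    ρ (swap b c) * ρ (swap a b) + ρ (swap a b) * ρ (swap b c) =
      ρ (swap a b) * ρ (swap a c) + ρ (swap a c) * ρ (swap a b) := by
  have hconj : swap b c * swap a b = swap a b * swap a c := by
    rw [swap_mul_eq_mul_swap, swap_inv, swap_apply_right,
      swap_apply_of_ne_of_ne hac.symm hbc.symm]
  have hconj' : swap a b * swap b c = swap a c * swap a b := by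
    rw [mul_swap_eq_swap_mul, swap_apply_right, swap_apply_of_ne_of_ne hac.symm hbc.symm]
  simp only [← map_mul, hconj, hconj']

lemma legElt_self (x j : V) : legElt ρ x j j = -(2 * ρ (swap x j)) := by
  simp only [legElt, swap_self, two_mul, if_true]
  rw [← Perm.one_def, map_one]
  abel

lemma legElt_self_anticommutator_legElt (hk : x ≠ k) :
    legElt ρ x j j * legElt ρ x j k + legElt ρ x j k * legElt ρ x j j = 4 * legWeight j k := by
  set t := ρ (swap x j) with ht
  have tt : t * t = 1 := map_swap_mul_self ρ x j
  rcases eq_or_ne j k with rfl | hjk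
  · calc _ = 8 * (t * t) := by rw [legElt_self, ← ht]; noncomm_ring
      _ = 4 * (legWeight j j : ℕ) := by rw [tt, legWeight, if_pos rfl]; norm_num
  · set p := ρ (swap x k)
    set q := ρ (swap j k)
    calc _ = 4 * (t * t) + 2 * (t * p + p * t) - 2 * (q * t + t * q) := by
          rw [legElt_self, legElt, if_neg hjk]; noncomm_ring
      _ = 4 * (legWeight j k : ℕ) := by
          rw [tt, map_swap_anticommutator_eq ρ hk hjk, legWeight, if_neg hjk, Nat.cast_one]; abel

lemma legElt_mul_self (hj : x ≠ j) (hk : x ≠ k) (hjk : j ≠ k) :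
    legElt ρ x j k * legElt ρ x j k =
      3 - (ρ (swap x j) * ρ (swap x k) + ρ (swap x k) * ρ (swap x j)) := by
  have hqt := map_swap_anticommutator_eq ρ hk hjk
  have hqp := map_swap_anticommutator_eq ρ hj hjk.symm
  rw [swap_comm k j] at hqp
  rw [legElt, if_neg hjk, sub_zero]
  set t := ρ (swap x j) with ht
  set p := ρ (swap x k) with hp
  set q := ρ (swap j k) with hq
  calc _ = q * q + t * t + p * p - (q * t + t * q) - (q * p + p * q) + (t * p + p * t) := by
        noncomm_ring
    _ = 3 - (t * p + p * t) := by
        rw [hqt, hqp, ht, hp, hq]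
        simp only [map_swap_mul_self]
        rw [← two_add_one_eq_three, ← one_add_one_eq_two]
        abel

lemma quarticDefect_eq_zero_of_triple (hm : x ≠ m) :
    quarticDefect ρ x j j j m = 0 := by
  have hpair : pairDefect ρ x j j j m = 0 := by
    rw [pairDefect, legElt_self_anticommutator_legElt ρ hm, legWeight, if_pos rfl, sub_eq_zero]
    push_cast
    norm_num
  rw [quarticDefect, pairDefect_swap_pairs ρ x j m, hpair, add_zero, add_zero]

lemma quarticDefect_eq_zero_of_pairs (hj : x ≠ j) (hl : x ≠ l) (hjl : j ≠ l) :
    quarticDefect ρ x j j l l = 0 := by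
  simp only [quarticDefect, pairDefect, legWeight, if_neg hjl, if_true, legElt_mul_self ρ hj hl hjl,
    legElt_self]
  noncomm_ring
  norm_num

end Degenerate

section LeftRegular

variable {G R : Type*} [Group G] [Ring R]

variable (G) in
/-- The left regular representation on the functions `G → ℤ`, that is, left multiplication of an
element of the group algebra, given by its coefficients. -/
def leftRegular : G →* Module.End ℤ (G → ℤ) where
  toFun σ := LinearMap.funLeft ℤ ℤ (σ⁻¹ * ·)
  map_one' := by ext; simp [LinearMap.funLeft]
  map_mul' σ τ := by ext; simp [LinearMap.funLeft, mul_assoc]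

/-- The coefficients of the unit of the group algebra. This is `Pi.single 1 1`, but defined by a
non-dependent `if` so that the kernel can evaluate it. -/
def unitCoeff [DecidableEq G] (g : G) : ℤ := if g = 1 then 1 else 0

variable [Fintype G]

lemma linearCombination_leftRegular (ρ : G →* R) (σ : G) (A : G → ℤ) :
    Fintype.linearCombination ℤ ρ (leftRegular G σ A) =
      ρ σ * Fintype.linearCombination ℤ ρ A := by
  simp only [Fintype.linearCombination_apply, Finset.mul_sum]
  refine Fintype.sum_equiv (Equiv.mulLeft σ⁻¹) _ _ fun g => ?_
  rw [mul_smul_comm, ← map_mul, Equiv.coe_mulLeft, mul_inv_cancel_left]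
  rfl

lemma linearCombination_unitCoeff [DecidableEq G] (ρ : G →* R) :
    Fintype.linearCombination ℤ ρ unitCoeff = 1 := by
  simp [Fintype.linearCombination_apply, unitCoeff]

variable {α : Type*} [DecidableEq α] [Fintype α] (ρ : Perm α →* R) (x j k l m : α)

lemma linearCombination_legElt (A : Perm α → ℤ) :
    Fintype.linearCombination ℤ ρ (legElt (leftRegular (Perm α)) x j k A) =
      legElt ρ x j k * Fintype.linearCombination ℤ ρ A := by
  simp only [legElt, sub_mul, ← linearCombination_leftRegular]
  split_ifs <;> simp

lemma linearCombination_quarticDefect (A : Perm α → ℤ) :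
    Fintype.linearCombination ℤ ρ (quarticDefect (leftRegular (Perm α)) x j k l m A) =
      quarticDefect ρ x j k l m * Fintype.linearCombination ℤ ρ A := by
  simp only [quarticDefect, pairDefect, add_mul, sub_mul, mul_assoc, ← linearCombination_legElt,
    LinearMap.add_apply, LinearMap.sub_apply, Module.End.mul_apply, Module.End.natCast_apply,
    map_add, map_sub, map_nsmul, ← nsmul_eq_mul]

variable {x j k l m}

lemma quarticDefect_mul_self_of_leftRegular {A : Perm α → ℤ}
    (hA : quarticDefect (leftRegular (Perm α)) x j k l m unitCoeff = A)
    (hmul : quarticDefect (leftRegular (Perm α)) x j k l m A = 24 • A) :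
    quarticDefect ρ x j k l m * quarticDefect ρ x j k l m = 24 * quarticDefect ρ x j k l m := by
  have hcoeff : quarticDefect ρ x j k l m = Fintype.linearCombination ℤ ρ A := by
    rw [← hA, linearCombination_quarticDefect, linearCombination_unitCoeff, mul_one]
  nth_rw 2 [hcoeff]
  rw [← linearCombination_quarticDefect, hmul, map_nsmul, hcoeff, nsmul_eq_mul, Nat.cast_ofNat]

end LeftRegular

section SmallCases

/-- The character of the irreducible representation `(2,2)` of a copy of `S₄` inside `S_n`, read off
from sign and order. -/
def charTwoTwo {n : ℕ} (g : Perm (Fin n)) : ℤ :=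
  if Perm.sign g = 1 then if g * g = 1 then 2 else -1 else 0

/-- The character `charTwoTwo` of the stabilizer of `i` in `S₅`, extended by zero. -/
def stabilizerCharTwoTwo (i : Fin 5) (g : Perm (Fin 5)) : ℤ :=
  if g i = i then charTwoTwo g else 0

/-- The coefficients of `quarticDefect` for the body `0` and the four legs `1`, `2`, `3`, `4`. -/
def quarticCoeff (g : Perm (Fin 5)) : ℤ :=
  ∑ i, stabilizerCharTwoTwo i g - 2 * stabilizerCharTwoTwo 0 g

lemma quarticDefect_one_pair_unitCoeff :
    quarticDefect (leftRegular (Perm (Fin 4))) 0 1 1 2 3 unitCoeff = 2 • charTwoTwo := by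
  decide +kernel

lemma quarticDefect_one_pair_charTwoTwo :
    quarticDefect (leftRegular (Perm (Fin 4))) 0 1 1 2 3 charTwoTwo = 24 • charTwoTwo := by
  decide +kernel

lemma quarticDefect_distinct_unitCoeff :
    quarticDefect (leftRegular (Perm (Fin 5))) 0 1 2 3 4 unitCoeff = quarticCoeff := by
  decide +kernel

lemma quarticDefect_distinct_quarticCoeff :
    quarticDefect (leftRegular (Perm (Fin 5))) 0 1 2 3 4 quarticCoeff = 24 • quarticCoeff := by
  decide +kernel

end SmallCases

section MulSelf

variable {V R : Type*} [DecidableEq V] [Ring R]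

lemma viaEmbedding_swap {α : Type*} [DecidableEq α] (e : α ↪ V) (i j : α) :
    Perm.viaEmbedding (swap i j) e = swap (e i) (e j) := by
  ext v
  by_cases hv : v ∈ Set.range e
  · obtain ⟨a, rfl⟩ := hv
    rw [Perm.viaEmbedding_apply, e.swap_apply]
  · rw [Perm.viaEmbedding_apply_of_notMem _ _ _ hv, swap_apply_of_ne_of_ne]
    · rintro rfl; exact hv ⟨i, rfl⟩
    · rintro rfl; exact hv ⟨j, rfl⟩

lemma quarticDefect_viaEmbedding (ρ : Perm V →* R) {α : Type*} [DecidableEq α] (e : α ↪ V)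
    (x j k l m : α) :
    quarticDefect (ρ.comp (Perm.viaEmbeddingHom e)) x j k l m =
      quarticDefect ρ (e x) (e j) (e k) (e l) (e m) := by
  simp [quarticDefect, pairDefect, legElt, legWeight, Perm.viaEmbeddingHom_apply,
    viaEmbedding_swap]

variable (ρ : Perm V →* R) {x j k l m : V}

lemma quarticDefect_mul_self_of_one_pair (h : [x, j, l, m].Nodup) :
    quarticDefect ρ x j j l m * quarticDefect ρ x j j l m = 24 * quarticDefect ρ x j j l m := by
  let e : Fin 4 ↪ V := ⟨![x, j, l, m], by rw [← List.nodup_ofFn]; simpa using h⟩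
  have hQ := quarticDefect_mul_self_of_leftRegular (ρ.comp (Perm.viaEmbeddingHom e))
    quarticDefect_one_pair_unitCoeff
    (by rw [map_nsmul, quarticDefect_one_pair_charTwoTwo, smul_comm])
  rwa [quarticDefect_viaEmbedding] at hQ

lemma quarticDefect_mul_self_of_distinct (h : [x, j, k, l, m].Nodup) :
    quarticDefect ρ x j k l m * quarticDefect ρ x j k l m = 24 * quarticDefect ρ x j k l m := by
  let e : Fin 5 ↪ V := ⟨![x, j, k, l, m], by rw [← List.nodup_ofFn]; simpa using h⟩
  have hQ := quarticDefect_mul_self_of_leftRegular (ρ.comp (Perm.viaEmbeddingHom e))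
    quarticDefect_distinct_unitCoeff quarticDefect_distinct_quarticCoeff
  rwa [quarticDefect_viaEmbedding] at hQ

lemma quarticDefect_mul_self_of_eq (hj : x ≠ j) (hl : x ≠ l) (hm : x ≠ m) :
    quarticDefect ρ x j j l m * quarticDefect ρ x j j l m = 24 * quarticDefect ρ x j j l m := by
  rcases eq_or_ne j l with rfl | hjl
  · simp [quarticDefect_eq_zero_of_triple ρ hm]
  rcases eq_or_ne j m with rfl | hjm
  · simp [quarticDefect_swap₃₄ ρ x j j l, quarticDefect_eq_zero_of_triple ρ hl]
  rcases eq_or_ne l m with rfl | hlm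
  · simp [quarticDefect_eq_zero_of_pairs ρ hj hl hjl]
  exact quarticDefect_mul_self_of_one_pair ρ (by simp [*])

theorem quarticDefect_mul_self (hj : x ≠ j) (hk : x ≠ k) (hl : x ≠ l) (hm : x ≠ m) :
    quarticDefect ρ x j k l m * quarticDefect ρ x j k l m = 24 * quarticDefect ρ x j k l m := by
  rcases eq_or_ne j k with rfl | hjk
  · exact quarticDefect_mul_self_of_eq ρ hj hl hm
  rcases eq_or_ne j l with rfl | hjl
  · rw [quarticDefect_swap₂₃]
    exact quarticDefect_mul_self_of_eq ρ hj hk hm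
  rcases eq_or_ne j m with rfl | hjm
  · rw [quarticDefect_swap₃₄, quarticDefect_swap₂₃]
    exact quarticDefect_mul_self_of_eq ρ hj hk hl
  rcases eq_or_ne k l with rfl | hkl
  · rw [quarticDefect_swap₁₂, quarticDefect_swap₂₃]
    exact quarticDefect_mul_self_of_eq ρ hk hj hm
  rcases eq_or_ne k m with rfl | hkm
  · rw [quarticDefect_swap₁₂, quarticDefect_swap₃₄, quarticDefect_swap₂₃]
    exact quarticDefect_mul_self_of_eq ρ hk hj hl
  rcases eq_or_ne l m with rfl | hlm
  · rw [quarticDefect_swap₂₃, quarticDefect_swap₃₄, quarticDefect_swap₁₂, quarticDefect_swap₂₃]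
    exact quarticDefect_mul_self_of_eq ρ hl hj hk
  exact quarticDefect_mul_self_of_distinct ρ (by simp [*])

end MulSelf

section QuadSum

variable {V R : Type*} [Ring R] [Algebra ℝ R] (s : Finset V) (c : V → ℝ)

/-- The sum of `G` over all ordered quadruples of elements of `s`, weighted by the products of their
values under `c`. -/
def quadSum (G : V → V → V → V → R) : R :=
  ∑ j ∈ s, ∑ k ∈ s, ∑ l ∈ s, ∑ m ∈ s, (c j * c k * c l * c m) • G j k l m

lemma quadSum_swap₂₃ (G : V → V → V → V → R) :
    quadSum s c G = quadSum s c fun j k l m => G j l k m := by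
  refine sum_congr rfl fun j _ => ?_
  rw [sum_comm]
  simp only [mul_right_comm (c j)]

lemma quadSum_swap₃₄ (G : V → V → V → V → R) :
    quadSum s c G = quadSum s c fun j k l m => G j k m l := by
  refine sum_congr rfl fun j _ => sum_congr rfl fun k _ => ?_
  rw [sum_comm]
  simp only [mul_right_comm (c j * c k)]

lemma quadSum_mul (g h : V → V → R) :
    quadSum s c (fun j k l m => g j k * h l m) =
      (∑ j ∈ s, ∑ k ∈ s, (c j * c k) • g j k) * ∑ j ∈ s, ∑ k ∈ s, (c j * c k) • h j k := by
  simp only [quadSum, Finset.sum_mul]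
  simp only [Finset.mul_sum, smul_mul_smul_comm, mul_assoc]

lemma quadSum_mul_swap_pairs (g h : V → V → R) :
    quadSum s c (fun j k l m => h l m * g j k) =
      (∑ j ∈ s, ∑ k ∈ s, (c j * c k) • h j k) * ∑ j ∈ s, ∑ k ∈ s, (c j * c k) • g j k := by
  simp only [quadSum, Finset.mul_sum]
  simp only [Finset.sum_mul, smul_mul_smul_comm, mul_left_comm, mul_comm]

variable [DecidableEq V] (ρ : Perm V →* R) (x : V)

/-- The scalar part of `octopus`, contributed by the weights `legWeight`. -/
def octopusWeight : ℝ := ∑ j ∈ s, ∑ k ∈ s, c j * c k * legWeight j k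

/-- The part of `octopus` that is a combination of transpositions, contributed by `legElt`. -/
def octopusOddPart : R := ∑ j ∈ s, ∑ k ∈ s, (c j * c k) • legElt ρ x j k

/-- The octopus operator with body `x`, legs `s` and conductances `c`. Its quadratic form is
`∑ w ∈ s, c w` times the difference of the two sides of the octopus inequality; see
`inner_octopus_apply_self`. -/
def octopus : R :=
  ∑ j ∈ s, ∑ k ∈ s, (c j * c k) • (1 - ρ (swap x j) - ρ (swap x k) + ρ (swap j k))

lemma smul_one_eq_sum_legWeight :
    octopusWeight s c • (1 : R) = ∑ j ∈ s, ∑ k ∈ s, (c j * c k) • (legWeight j k : R) := by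
  simp only [octopusWeight, sum_smul, mul_smul, Nat.cast_smul_eq_nsmul, nsmul_one]

lemma octopus_eq_smul_one_add :
    octopus s c ρ x = octopusWeight s c • 1 + octopusOddPart s c ρ x := by
  simp only [smul_one_eq_sum_legWeight, octopusOddPart, octopus, ← legWeight_add_legElt, smul_add,
    sum_add_distrib]

variable {s c} in
lemma octopusWeight_pos (hc : ∀ j ∈ s, 0 ≤ c j) (hs : 0 < ∑ j ∈ s, c j) :
    0 < octopusWeight s c := by
  refine (mul_pos hs hs).trans_le ?_
  rw [sum_mul_sum]
  refine sum_le_sum fun j hj => sum_le_sum fun k hk => ?_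
  exact le_mul_of_one_le_right (mul_nonneg (hc j hj) (hc k hk))
    (mod_cast one_le_legWeight j k)

lemma quadSum_pairDefect :
    quadSum s c (pairDefect ρ x) = (2 : ℝ) •
      (octopusWeight s c ^ 2 • 1 - octopusOddPart s c ρ x * octopusOddPart s c ρ x) := by
  have hsplit : quadSum s c (pairDefect ρ x) =
      (2 : ℝ) • quadSum s c (fun j k l m => (legWeight j k : R) * legWeight l m)
      - (quadSum s c (fun j k l m => legElt ρ x j k * legElt ρ x l m)
        + quadSum s c fun j k l m => legElt ρ x l m * legElt ρ x j k) := by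
    simp only [quadSum, pairDefect, smul_sum, ← sum_add_distrib, ← sum_sub_distrib]
    refine sum_congr rfl fun j _ => sum_congr rfl fun k _ => sum_congr rfl fun l _ =>
      sum_congr rfl fun m _ => ?_
    push_cast
    rw [mul_assoc 2, two_mul]
    module
  rw [hsplit, quadSum_mul, quadSum_mul, quadSum_mul_swap_pairs, ← smul_one_eq_sum_legWeight,
    ← octopusOddPart, smul_mul_smul_comm, mul_one]
  module

lemma quadSum_quarticDefect :
    quadSum s c (quarticDefect ρ x) = (6 : ℝ) •
      (octopusWeight s c ^ 2 • 1 - octopusOddPart s c ρ x * octopusOddPart s c ρ x) := by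
  have hsplit : quadSum s c (quarticDefect ρ x) = quadSum s c (pairDefect ρ x)
      + quadSum s c (fun j k l m => pairDefect ρ x j l k m)
      + quadSum s c (fun j k l m => pairDefect ρ x j m k l) := by
    simp only [quadSum, quarticDefect, smul_add, sum_add_distrib]
  rw [hsplit, quadSum_swap₃₄ s c fun j k l m => pairDefect ρ x j m k l,
    ← quadSum_swap₂₃ s c (pairDefect ρ x), quadSum_pairDefect]
  module

end QuadSum

section Positivity

open scoped InnerProductSpace

variable {H : Type*} [NormedAddCommGroup H] [InnerProductSpace ℝ H] {S T : Module.End ℝ H}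

lemma isSymmetric_of_norm_map_of_mul_self_eq_one (hT : ∀ v, ‖T v‖ = ‖v‖) (hTT : T * T = 1) :
    T.IsSymmetric := fun v w => by
  calc ⟪T v, w⟫_ℝ = ⟪T v, T (T w)⟫_ℝ := by rw [← Module.End.mul_apply, hTT, Module.End.one_apply]
    _ = ⟪v, T w⟫_ℝ := LinearIsometry.inner_map_map ⟨T, hT⟩ v (T w)

lemma isSymmetric_anticommutator (hS : S.IsSymmetric) (hT : T.IsSymmetric) :
    (S * T + T * S).IsSymmetric := fun v w => by
  simp only [LinearMap.add_apply, Module.End.mul_apply, inner_add_left, inner_add_right, hS _ _,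
    hT _ _]
  rw [add_comm]

lemma isPositive_mul_self (hT : T.IsSymmetric) : (T * T).IsPositive :=
  ⟨hT.mul_of_commute hT (Commute.refl T), fun v => by
    rw [Module.End.mul_apply, hT]; exact real_inner_self_nonneg⟩

lemma isPositive_of_mul_self_eq_smul {a : ℝ} (ha : 0 < a) (hT : T.IsSymmetric)
    (hTT : T * T = a • T) : T.IsPositive := by
  have h := (isPositive_mul_self hT).smul_of_nonneg (inv_nonneg.2 ha.le)
  rwa [hTT, inv_smul_smul₀ ha.ne'] at h

lemma isPositive_smul_one_add {a : ℝ} (ha : 0 < a) (hT : T.IsSymmetric)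
    (hTT : (a ^ 2 • 1 - T * T).IsPositive) : (a • 1 + T).IsPositive := by
  have hsymm : (a • 1 + T).IsSymmetric := (LinearMap.IsSymmetric.one.smul rfl).add hT
  have hsquare : (a • 1 + T) * (a • 1 + T) + (a ^ 2 • 1 - T * T) = (2 * a) • (a • 1 + T) := by
    simp only [mul_add, add_mul, smul_mul_assoc, mul_smul_comm, one_mul, mul_one]
    module
  have h := ((isPositive_mul_self hsymm).add hTT).smul_of_nonneg
    (show 0 ≤ (2 * a)⁻¹ by positivity)
  rwa [hsquare, inv_smul_smul₀ (by positivity)] at h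

lemma inner_one_sub_apply_self (hT : ∀ v, ‖T v‖ = ‖v‖) (v : H) :
    ⟪(1 - T) v, v⟫_ℝ = ‖T v - v‖ ^ 2 / 2 := by
  rw [norm_sub_sq_real, hT, LinearMap.sub_apply, Module.End.one_apply, inner_sub_left,
    real_inner_self_eq_norm_sq]
  ring

variable {V : Type*} [DecidableEq V] {ρ : Perm V →* Module.End ℝ H}
  {x : V} {s : Finset V} {c : V → ℝ}

lemma isSymmetric_legElt (hρ : ∀ σ v, ‖ρ σ v‖ = ‖v‖) (x j k : V) :
    (legElt ρ x j k).IsSymmetric := by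
  have hswap (a b : V) : (ρ (swap a b)).IsSymmetric :=
    isSymmetric_of_norm_map_of_mul_self_eq_one (hρ _) (map_swap_mul_self ρ a b)
  refine (((hswap j k).sub (hswap x j)).sub (hswap x k)).sub ?_
  split_ifs
  · exact .one
  · exact .zero

lemma isSymmetric_quarticDefect (hρ : ∀ σ v, ‖ρ σ v‖ = ‖v‖) (x j k l m : V) :
    (quarticDefect ρ x j k l m).IsSymmetric := by
  have hpair (j k l m : V) : (pairDefect ρ x j k l m).IsSymmetric :=
    (LinearMap.IsSymmetric.natCast _).sub
      (isSymmetric_anticommutator (isSymmetric_legElt hρ x j k) (isSymmetric_legElt hρ x l m))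
  exact ((hpair j k l m).add (hpair j l k m)).add (hpair j m k l)

lemma isPositive_quarticDefect (hρ : ∀ σ v, ‖ρ σ v‖ = ‖v‖) {j k l m : V} (hj : x ≠ j)
    (hk : x ≠ k) (hl : x ≠ l) (hm : x ≠ m) : (quarticDefect ρ x j k l m).IsPositive := by
  refine isPositive_of_mul_self_eq_smul (a := 24) (by norm_num)
    (isSymmetric_quarticDefect hρ x j k l m) ?_
  rw [quarticDefect_mul_self ρ hj hk hl hm, Algebra.smul_def, map_ofNat]

lemma isPositive_quadSum_quarticDefect (hρ : ∀ σ v, ‖ρ σ v‖ = ‖v‖) (hx : x ∉ s)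
    (hc : ∀ j ∈ s, 0 ≤ c j) : (quadSum s c (quarticDefect ρ x)).IsPositive := by
  have hne {j : V} (hj : j ∈ s) : x ≠ j := (ne_of_mem_of_not_mem hj hx).symm
  refine LinearMap.isPositive_sum _ fun j hj => LinearMap.isPositive_sum _ fun k hk =>
    LinearMap.isPositive_sum _ fun l hl => LinearMap.isPositive_sum _ fun m hm => ?_
  refine (isPositive_quarticDefect hρ (hne hj) (hne hk) (hne hl) (hne hm)).smul_of_nonneg ?_
  exact mul_nonneg (mul_nonneg (mul_nonneg (hc j hj) (hc k hk)) (hc l hl)) (hc m hm)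

theorem isPositive_octopus (hρ : ∀ σ v, ‖ρ σ v‖ = ‖v‖) (hx : x ∉ s) (hc : ∀ j ∈ s, 0 ≤ c j)
    (hs : 0 < ∑ j ∈ s, c j) : (octopus s c ρ x).IsPositive := by
  have hodd : (octopusOddPart s c ρ x).IsSymmetric :=
    LinearMap.isSymmetric_sum _ fun j _ => LinearMap.isSymmetric_sum _ fun k _ =>
      (isSymmetric_legElt hρ x j k).smul rfl
  have hdefect := (isPositive_quadSum_quarticDefect hρ hx hc).smul_of_nonneg
    (show (0 : ℝ) ≤ 6⁻¹ by norm_num)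
  rw [quadSum_quarticDefect, inv_smul_smul₀ (by norm_num)] at hdefect
  rw [octopus_eq_smul_one_add]
  exact isPositive_smul_one_add (octopusWeight_pos hc hs) hodd hdefect

lemma inner_octopus_apply_self (hρ : ∀ σ v, ‖ρ σ v‖ = ‖v‖) (v : H) :
    ⟪octopus s c ρ x v, v⟫_ℝ = (∑ w ∈ s, c w) * ∑ y ∈ s, c y * ‖ρ (swap x y) v - v‖ ^ 2 -
      (1 / 2) * ∑ y ∈ s, ∑ z ∈ s, c y * c z * ‖ρ (swap y z) v - v‖ ^ 2 := by
  let D (σ : Perm V) : ℝ := ‖ρ σ v - v‖ ^ 2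
  have hterm (y z : V) : ⟪(1 - ρ (swap x y) - ρ (swap x z) + ρ (swap y z)) v, v⟫_ℝ =
      (D (swap x y) + D (swap x z) - D (swap y z)) / 2 := by
    rw [show 1 - ρ (swap x y) - ρ (swap x z) + ρ (swap y z) =
      (1 - ρ (swap x y)) + (1 - ρ (swap x z)) - (1 - ρ (swap y z)) by abel]
    rw [LinearMap.sub_apply, LinearMap.add_apply, inner_sub_left, inner_add_left]
    simp only [inner_one_sub_apply_self (hρ _), D]
    ring
  have hleft : (∑ w ∈ s, c w) * ∑ y ∈ s, c y * D (swap x y) =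
      ∑ y ∈ s, ∑ z ∈ s, c y * c z * D (swap x z) := by
    simp only [sum_mul_sum, mul_assoc]
  have hright : ∑ y ∈ s, ∑ z ∈ s, c y * c z * D (swap x y) =
      ∑ y ∈ s, ∑ z ∈ s, c y * c z * D (swap x z) := by
    rw [sum_comm]; simp only [mul_comm (c _) (c _)]
  calc ⟪octopus s c ρ x v, v⟫_ℝ
      = (1 / 2) * (∑ y ∈ s, ∑ z ∈ s, c y * c z * D (swap x y)
          + ∑ y ∈ s, ∑ z ∈ s, c y * c z * D (swap x z)
          - ∑ y ∈ s, ∑ z ∈ s, c y * c z * D (swap y z)) := by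
        simp only [octopus, LinearMap.sum_apply, LinearMap.smul_apply, sum_inner,
          real_inner_smul_left, hterm, ← sum_add_distrib, ← sum_sub_distrib, Finset.mul_sum]
        congr! 2
        ring
    _ = _ := by rw [hright, ← hleft]; ring

end Positivity

section RightRegular

variable {G : Type*} [Group G] [Fintype G]

variable (G) in
/-- The right regular representation: `σ` maps the function `η ↦ v η` to `η ↦ v (η * σ)`. -/
def rightRegular : G →* Module.End ℝ (EuclideanSpace ℝ G) where
  toFun σ := (LinearIsometryEquiv.piLpCongrLeft 2 ℝ ℝ (Equiv.mulRight σ).symm).toLinearMap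
  map_one' := by ext v η; exact congrArg v (mul_one η)
  map_mul' σ τ := by ext v η; exact congrArg v (mul_assoc η σ τ).symm

lemma rightRegular_apply (σ η : G) (v : EuclideanSpace ℝ G) :
    rightRegular G σ v η = v (η * σ) := rfl

lemma norm_rightRegular_apply (σ : G) (v : EuclideanSpace ℝ G) : ‖rightRegular G σ v‖ = ‖v‖ :=
  LinearIsometryEquiv.norm_map _ v

/-- The function `f`, scaled such that its squared norm is its second moment under the uniform
measure on `G`. -/
def normalizedVec (f : G → ℝ) : EuclideanSpace ℝ G :=
  WithLp.toLp 2 fun η => f η / √(Fintype.card G)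

lemma permExp_sq_sub {V : Type*} [Fintype V] [DecidableEq V] (f : Perm V → ℝ) (σ : Perm V) :
    permExp (fun η => (f (η * σ) - f η) ^ 2) =
      ‖rightRegular (Perm V) σ (normalizedVec f) - normalizedVec f‖ ^ 2 := by
  simp only [EuclideanSpace.real_norm_sq_eq, PiLp.sub_apply, rightRegular_apply, normalizedVec,
    ← sub_div, div_pow, Real.sq_sqrt (Nat.cast_nonneg _), ← sum_div, permExp]

end RightRegular

theorem octopus_inequality_general {V H : Type*} [DecidableEq V] [NormedAddCommGroup H]
    [InnerProductSpace ℝ H] {ρ : Perm V →* Module.End ℝ H} (hρ : ∀ σ v, ‖ρ σ v‖ = ‖v‖)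
    {x : V} {s : Finset V} (hx : x ∉ s) {c : V → ℝ} (hc : ∀ y ∈ s, 0 ≤ c y)
    (hs : 0 < ∑ w ∈ s, c w) (v : H) :
    (1 / 2) * ∑ y ∈ s, ∑ z ∈ s, (c y * c z / ∑ w ∈ s, c w) * ‖ρ (swap y z) v - v‖ ^ 2 ≤
      ∑ y ∈ s, c y * ‖ρ (swap x y) v - v‖ ^ 2 := by
  have hpos : 0 ≤ inner ℝ (octopus s c ρ x v) v := (isPositive_octopus hρ hx hc hs).2 v
  rw [inner_octopus_apply_self hρ, sub_nonneg, ← div_le_iff₀' hs, mul_div_assoc] at hpos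
  simpa only [sum_div, div_mul_eq_mul_div] using hpos

theorem octopus_inequality {V : Type*} [Fintype V] [DecidableEq V]
    (c : V → V → ℝ) (hnn : ∀ z w, 0 ≤ c z w) (hsymm : ∀ z w, c z w = c w z)
    (hdiag : ∀ z, c z z = 0) (x : V)
    (hx : 0 < ∑ w ∈ univ.erase x, c x w)
    (f : Equiv.Perm V → ℝ) :
    ∑ y ∈ univ.erase x, c x y *
        permExp (fun η => (f (η * Equiv.swap x y) - f η) ^ 2) ≥
      (1 / 2) * ∑ y ∈ univ.erase x, ∑ z ∈ univ.erase x,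
        (c y x * c x z / ∑ w ∈ univ.erase x, c x w) *
          permExp (fun η => (f (η * Equiv.swap y z) - f η) ^ 2) := by
  simpa only [permExp_sq_sub, hsymm _ x] using octopus_inequality_general norm_rightRegular_apply
    (notMem_erase x univ) (fun w _ => hnn x w) hx (normalizedVec f)
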